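/- Let α = (α₁,α₂,α₃) be a random vector in ℝ³ with i.i.d. N(0, σ²) components, θ = ‖α‖, â = α/θ. Then the expected value of the random unitary Jones matrix R(α) = I₂cos(θ) − i(â·σ)sin(θ) is E[R(α)] = (1 − σ²)·exp(−σ²/2)·I₂. -/

import Mathlib

open Matrix MeasureTheory ProbabilityTheory

/-- The Pauli matrices `σ₁, σ₂, σ₃`. -/
noncomputable def pauli : Fin 3 → Matrix (Fin 2) (Fin 2) ℂ :=
  ![!![1, 0; 0, -1], !![0, 1; 1, 0], !![0, -Complex.I; Complex.I, 0]]

/-- `v·σ = v₁σ₁ + v₂σ₂ + v₃σ₃` for a real vector `v`. -/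
noncomputable def pdot (v : Fin 3 → ℝ) : Matrix (Fin 2) (Fin 2) ℂ :=
  (v 0 : ℂ) • pauli 0 + (v 1 : ℂ) • pauli 1 + (v 2 : ℂ) • pauli 2

/-- Euclidean norm of a vector in ℝ³. -/
noncomputable def nrm3 (α : Fin 3 → ℝ) : ℝ := Real.sqrt (α 0 ^ 2 + α 1 ^ 2 + α 2 ^ 2)

/-- `R(α) = cos(θ)I₂ − i sin(θ)(â·σ)` with `θ = ‖α‖`, `â = α/θ`. -/
noncomputable def Rjones (α : Fin 3 → ℝ) : Matrix (Fin 2) (Fin 2) ℂ :=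
  (Real.cos (nrm3 α) : ℂ) • 1 -
    (Complex.I * Real.sin (nrm3 α)) • pdot (fun i => α i / nrm3 α)

lemma aux_charFun_second (v : NNReal) :
    ∫ x, x ^ 2 * Real.cos x ∂(gaussianReal 0 v) =
      ((v : ℝ) - (v : ℝ) ^ 2) * Real.exp (-(v : ℝ) / 2) := by
  have hm : MemLp id ((2 : ℕ) : ENNReal) (gaussianReal 0 v) := memLp_id_gaussianReal' _ (by simp)
  have h := iteratedDeriv_charFun (t := 1) hm
  have hφ : charFun (gaussianReal 0 v) = fun t : ℝ => ((Real.exp (-(v : ℝ) * t ^ 2 / 2) : ℝ) : ℂ) := by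
    ext t
    rw [charFun_gaussianReal]
    push_cast
    congr 1
    ring
  have d1 : ∀ t : ℝ, HasDerivAt (fun t : ℝ => Real.exp (-(v : ℝ) * t ^ 2 / 2))
      (-(v : ℝ) * t * Real.exp (-(v : ℝ) * t ^ 2 / 2)) t := by
    intro t
    have := ((((hasDerivAt_id t).pow 2).const_mul (-(v : ℝ))).div_const 2).exp
    convert! this using 1
    simp
    ring
  have d2 : HasDerivAt (fun t : ℝ => -(v : ℝ) * t * Real.exp (-(v : ℝ) * t ^ 2 / 2))
      (((v : ℝ) ^ 2 - v) * Real.exp (-(v : ℝ) / 2)) 1 := by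
    have := ((hasDerivAt_id (1 : ℝ)).const_mul (-(v : ℝ))).mul (d1 1)
    convert! this using 1
    simp
    ring
  have h2 : iteratedDeriv 2 (charFun (gaussianReal 0 v)) 1 =
      (((((v : ℝ) ^ 2 - v) * Real.exp (-(v : ℝ) / 2) : ℝ)) : ℂ) := by
    rw [iteratedDeriv_succ, iteratedDeriv_one, hφ]
    have : deriv (fun t : ℝ => ((Real.exp (-(v : ℝ) * t ^ 2 / 2) : ℝ) : ℂ)) =
        fun t : ℝ => ((-(v : ℝ) * t * Real.exp (-(v : ℝ) * t ^ 2 / 2) : ℝ) : ℂ) := by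
      ext t
      exact (d1 t).ofReal_comp.deriv
    rw [this]
    exact d2.ofReal_comp.deriv
  rw [h2] at h
  have hint : Integrable (fun x : ℝ => (x : ℂ) ^ 2 * Complex.exp (((1 : ℝ) : ℂ) * x * Complex.I))
      (gaussianReal 0 v) := by
    have h0 : Integrable (fun x : ℝ => x ^ 2) (gaussianReal 0 v) := by
      have := hm.integrable_sq
      simpa using this
    refine h0.mono (by fun_prop) (Filter.Eventually.of_forall fun x => ?_)
    rw [norm_mul]
    have : ((1 : ℝ) : ℂ) * x * Complex.I = (x : ℂ) * Complex.I := by simp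
    rw [this, Complex.norm_exp_ofReal_mul_I]
    simp
  have h3 := congrArg Complex.re h
  rw [Complex.I_sq, neg_one_mul, Complex.neg_re, ← RCLike.re_eq_complex_re, ← integral_re hint,
    RCLike.re_eq_complex_re, Complex.ofReal_re] at h3
  have h4 : ∀ x : ℝ, ((x : ℂ) ^ 2 * Complex.exp (((1 : ℝ) : ℂ) * x * Complex.I)).re
      = x ^ 2 * Real.cos x := by
    intro x
    have : ((1 : ℝ) : ℂ) * x * Complex.I = (x : ℂ) * Complex.I := by simp
    rw [this, ← Complex.ofReal_pow, Complex.re_ofReal_mul, Complex.exp_ofReal_mul_I_re]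
  simp_rw [h4] at h3
  linarith

lemma aux_pi_density (v : NNReal) (hv : v ≠ 0) :
    (Measure.pi fun _ : Fin 3 => gaussianReal 0 v) =
      (volume : Measure (Fin 3 → ℝ)).withDensity
        (fun x => ENNReal.ofReal (∏ i, gaussianPDFReal 0 v (x i))) := by
  refine Measure.pi_eq fun s hs => ?_
  rw [withDensity_apply _ (MeasurableSet.univ_pi hs), volume_pi, Measure.restrict_pi_pi,
    ← ofReal_integral_eq_lintegral_ofReal, integral_fintype_prod_eq_prod,
    ENNReal.ofReal_prod_of_nonneg]
  · refine Finset.prod_congr rfl fun i _ => ?_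
    rw [gaussianReal_apply_eq_integral _ hv]
  · intro i _
    exact integral_nonneg fun x => gaussianPDFReal_nonneg _ _ _
  · exact Integrable.fintype_prod (f := fun _ => gaussianPDFReal 0 v)
      fun i => (integrable_gaussianPDFReal 0 v).restrict
  · exact Filter.Eventually.of_forall fun x =>
      Finset.prod_nonneg fun i _ => gaussianPDFReal_nonneg _ _ _

lemma aux_nrm3 (x : EuclideanSpace ℝ (Fin 3)) : nrm3 x.ofLp = ‖x‖ := by
  rw [EuclideanSpace.norm_eq, nrm3]
  simp [Fin.sum_univ_three]

lemma aux_cos (v : NNReal) :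
    ∫ x, Real.cos (nrm3 x) ∂(Measure.pi fun _ : Fin 3 => gaussianReal 0 v) =
      (1 - (v : ℝ)) * Real.exp (-(v : ℝ) / 2) := by
  by_cases hv : v = 0
  · subst hv
    simp only [gaussianReal_zero_var]
    have : (Measure.pi fun _ : Fin 3 => Measure.dirac (0 : ℝ)) = Measure.dirac 0 := by
      refine Measure.pi_eq fun s hs => ?_
      rw [Measure.dirac_apply' _ (MeasurableSet.univ_pi hs)]
      simp_rw [fun i => Measure.dirac_apply' (0 : ℝ) (hs i)]
      by_cases h : ∀ i, (0 : ℝ) ∈ s i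
      · simp [Set.indicator, h]
      · simp only [Set.indicator, Set.mem_univ_pi, Pi.zero_apply, h, if_false]
        push Not at h
        obtain ⟨i, hi⟩ := h
        exact (Finset.prod_eq_zero (Finset.mem_univ i) (by simp [hi])).symm
    rw [this, integral_dirac]
    simp [nrm3]
  have hv0 : (0 : ℝ) < v := by positivity
  set C : ℝ := (√(2 * Real.pi * v))⁻¹ with hC
  have hC2 : C ^ 2 = (2 * Real.pi * v)⁻¹ := by
    rw [hC, inv_pow, Real.sq_sqrt (by positivity)]
  set g : ℝ → ℝ := fun y => C ^ 3 * Real.exp (-y ^ 2 / (2 * v)) * Real.cos y with hg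
  have hm : Measurable fun x : Fin 3 → ℝ =>
      ENNReal.ofReal (∏ i, gaussianPDFReal 0 v (x i)) := by
    have := measurable_gaussianPDFReal 0 v
    fun_prop
  have hpt : ∀ x : EuclideanSpace ℝ (Fin 3),
      (ENNReal.ofReal (∏ i, gaussianPDFReal 0 v (x.ofLp i))).toReal • Real.cos (nrm3 x.ofLp)
        = g ‖x‖ := by
    intro x
    rw [aux_nrm3, ENNReal.toReal_ofReal
      (Finset.prod_nonneg fun i _ => gaussianPDFReal_nonneg _ _ _), hg, smul_eq_mul]
    simp only [gaussianPDFReal, Fin.prod_univ_three, sub_zero]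
    rw [EuclideanSpace.real_norm_sq_eq, Fin.sum_univ_three]
    have : Real.exp (-(x.ofLp 0 ^ 2 + x.ofLp 1 ^ 2 + x.ofLp 2 ^ 2) / (2 * v)) =
      Real.exp (-x.ofLp 0 ^ 2 / (2 * v)) * Real.exp (-x.ofLp 1 ^ 2 / (2 * v)) *
        Real.exp (-x.ofLp 2 ^ 2 / (2 * v)) := by
      rw [← Real.exp_add, ← Real.exp_add]
      congr 1
      ring
    rw [this]
    ring
  have hball : (volume : Measure (EuclideanSpace ℝ (Fin 3))).real (Metric.ball 0 1)
      = Real.pi * 4 / 3 := by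
    rw [measureReal_def, EuclideanSpace.volume_ball_fin_three]
    simp
    positivity
  have hhalf : ∫ x, x ^ 2 * Real.cos x ∂(gaussianReal 0 v) =
      2 * ∫ y in Set.Ioi (0 : ℝ), C * Real.exp (-y ^ 2 / (2 * v)) * (y ^ 2 * Real.cos y) := by
    rw [integral_gaussianReal_eq_integral_smul hv, ← integral_comp_abs
      (f := fun y => C * Real.exp (-y ^ 2 / (2 * v)) * (y ^ 2 * Real.cos y))]
    simp only [gaussianPDFReal, sub_zero, smul_eq_mul, sq_abs, Real.cos_abs, hC]
  rw [aux_charFun_second] at hhalf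
  rw [aux_pi_density v hv, integral_withDensity_eq_integral_toReal_smul hm
    (Filter.Eventually.of_forall fun x => ENNReal.ofReal_lt_top),
    ← (PiLp.volume_preserving_ofLp (Fin 3)).integral_comp
      (MeasurableEquiv.toLp 2 (Fin 3 → ℝ)).symm.measurableEmbedding]
  simp_rw [hpt]
  rw [integral_fun_norm_addHaar volume g, hball]
  simp only [finrank_euclideanSpace, Fintype.card_fin, nsmul_eq_mul, smul_eq_mul]
  have hlast : ∫ y in Set.Ioi (0 : ℝ), y ^ (3 - 1) * g y = C ^ 2 *
      ∫ y in Set.Ioi (0 : ℝ), C * Real.exp (-y ^ 2 / (2 * v)) * (y ^ 2 * Real.cos y) := by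
    rw [← integral_const_mul]
    congr 1
    ext y
    simp only [hg]
    norm_num
    ring
  have hI : ∫ y in Set.Ioi (0 : ℝ), C * Real.exp (-y ^ 2 / (2 * v)) * (y ^ 2 * Real.cos y) =
      ((v : ℝ) - (v : ℝ) ^ 2) * Real.exp (-(v : ℝ) / 2) / 2 := by linarith
  rw [hlast, hI, hC2]
  have := Real.pi_ne_zero
  push_cast
  field_simp
  ring

lemma aux_measurable_nrm3 : Measurable nrm3 := by
  unfold nrm3
  fun_prop

lemma aux_odd (v : NNReal) (k : Fin 3) :
    ∫ x, Real.sin (nrm3 x) * (x k / nrm3 x) ∂(Measure.pi fun _ : Fin 3 => gaussianReal 0 v)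
      = 0 := by
  have hmp : MeasurePreserving (fun (x : Fin 3 → ℝ) i => -x i)
      (Measure.pi fun _ : Fin 3 => gaussianReal 0 v)
      (Measure.pi fun _ : Fin 3 => gaussianReal 0 v) :=
    measurePreserving_pi _ _ fun i => ⟨by fun_prop, by rw [gaussianReal_map_neg, neg_zero]⟩
  have h := hmp.integral_comp (MeasurableEquiv.neg (Fin 3 → ℝ)).measurableEmbedding
    (fun x => Real.sin (nrm3 x) * (x k / nrm3 x))
  have hn : ∀ x : Fin 3 → ℝ, nrm3 (fun i => -x i) = nrm3 x := by
    intro x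
    simp [nrm3]
  simp_rw [hn, neg_div, mul_neg] at h
  rw [integral_neg] at h
  linarith

lemma aux_bound (x : Fin 3 → ℝ) (k : Fin 3) : |Real.sin (nrm3 x) * (x k / nrm3 x)| ≤ 1 := by
  have h1 : |x k| ≤ nrm3 x := by
    rw [← Real.sqrt_sq_eq_abs]
    apply Real.sqrt_le_sqrt
    have a0 := sq_nonneg (x 0)
    have a1 := sq_nonneg (x 1)
    have a2 := sq_nonneg (x 2)
    fin_cases k <;> simp only [Fin.zero_eta, Fin.mk_one, Fin.reduceFinMk] <;> linarith
  have h0 : 0 ≤ nrm3 x := Real.sqrt_nonneg _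
  rw [abs_mul, abs_div, abs_of_nonneg h0]
  exact mul_le_one₀ (Real.abs_sin_le_one _) (by positivity) (div_le_one_of_le₀ h1 h0)

lemma aux_int_odd (v : NNReal) (k : Fin 3) :
    Integrable (fun x : Fin 3 → ℝ => Real.sin (nrm3 x) * (x k / nrm3 x))
      (Measure.pi fun _ : Fin 3 => gaussianReal 0 v) := by
  have := aux_measurable_nrm3
  exact Integrable.of_bound (by fun_prop) 1 (Filter.Eventually.of_forall fun x => aux_bound x k)

lemma aux_int_cos (v : NNReal) :
    Integrable (fun x : Fin 3 → ℝ => Real.cos (nrm3 x))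
      (Measure.pi fun _ : Fin 3 => gaussianReal 0 v) := by
  have := aux_measurable_nrm3
  exact Integrable.of_bound (by fun_prop) 1
    (Filter.Eventually.of_forall fun x => Real.abs_cos_le_one _)

lemma aux_entry (x : Fin 3 → ℝ) (i j : Fin 2) :
    Rjones x i j = (1 : Matrix (Fin 2) (Fin 2) ℂ) i j * ((Real.cos (nrm3 x) : ℝ) : ℂ) -
      ∑ k : Fin 3, (Complex.I * pauli k i j) *
        ((Real.sin (nrm3 x) * (x k / nrm3 x) : ℝ) : ℂ) := by
  simp only [Rjones, pdot, Fin.sum_univ_three, Matrix.sub_apply, Matrix.smul_apply,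
    Matrix.add_apply, smul_eq_mul]
  push_cast
  ring

lemma aux_measurable_entry (i j : Fin 2) : Measurable fun x => Rjones x i j := by
  have := aux_measurable_nrm3
  simp_rw [aux_entry]
  fun_prop

/-- If `α` has i.i.d. `N(0, σ²)` components (`v = σ²` is the common variance), then
`E[R(α)] = (1 − σ²)·exp(−σ²/2)·I₂` (stated entrywise). -/
theorem mean_Rjones {Ω : Type*} [MeasurableSpace Ω]
    (μ : Measure Ω) [IsProbabilityMeasure μ] (v : NNReal)
    (α : Ω → (Fin 3 → ℝ)) (hα : Measurable α)
    (hlaw : μ.map α = Measure.pi fun _ : Fin 3 => gaussianReal 0 v) :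
    ∀ i j : Fin 2, ∫ ω, Rjones (α ω) i j ∂μ =
      (((1 - (v : ℝ)) * Real.exp (-(v : ℝ) / 2) : ℝ) : ℂ) *
        (1 : Matrix (Fin 2) (Fin 2) ℂ) i j := by
  intro i j
  rw [← integral_map (f := fun x => Rjones x i j) hα.aemeasurable
    (aux_measurable_entry i j).aestronglyMeasurable, hlaw]
  simp_rw [aux_entry]
  rw [integral_sub ((aux_int_cos v).ofReal.const_mul _)
    (integrable_finsetSum _ fun k _ => (aux_int_odd v k).ofReal.const_mul _),
    integral_finsetSum _ fun k _ => (aux_int_odd v k).ofReal.const_mul _]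
  simp_rw [integral_const_mul, integral_complex_ofReal, aux_odd, aux_cos]
  simp [mul_comm]
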